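/- arXiv:2108.05295 — 4 statements merged into one kernel-verified Lean document; each statement's English description precedes it below -/
import Mathlib

section
/- Let k ≥ 4 be an integer and let G be a finite simple graph with a dominating vertex r. Suppose v ≠ r is a vertex which is the endpoint of an r-avoiding path of length k − 3 in G. Then for every vertex u ≠ v and every integer ℓ with d(u,v) ≤ ℓ ≤ k − 2, there is a path from u to v in G of length exactly ℓ. -/
/-!
If `ℓ = 1`, then `u` and `v` are adjacent. Otherwise `v` is the end of an `r`-avoiding path `P` of
length `ℓ - 1 ≥ 1`, and a detour through `r` turns `P` into a path of length `ℓ` from `u` to `v`: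
* if `u = r`, prepend `r` to `P`;
* if `u ≠ r` is not on `P`, replace the first vertex of `P` by `u, r`;
* if `u` is on `P = w … u y … v`, run backwards from `u` to `w`, jump to `r`, from there to `y` and
  on to `v`: the edge `u y` is traded for the two edges `w r` and `r y`.
-/

open SimpleGraph

section

variable {V : Type*} {G : SimpleGraph V} {r u v w x y : V}

theorem isPath_append_cons {s : G.Walk u x} {t : G.Walk y v} (hs : s.IsPath) (ht : t.IsPath)
    (hst : s.support.Disjoint t.support) (hxy : G.Adj x y) :
    (s.append (.cons hxy t)).IsPath := by
  rw [Walk.isPath_def, Walk.support_append, Walk.support_cons, List.tail_cons]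
  exact hs.support_nodup.append ht.support_nodup hst

theorem exists_isPath_length_eq_add_add_two {s : G.Walk u x} {t : G.Walk y v}
    (hs : s.IsPath) (ht : t.IsPath) (hrs : r ∉ s.support) (hrt : r ∉ t.support)
    (hst : s.support.Disjoint t.support) (hxr : G.Adj x r) (hry : G.Adj r y) :
    ∃ q : G.Walk u v, q.IsPath ∧ q.length = s.length + t.length + 2 := by
  have hs_rt : s.support.Disjoint (Walk.cons hry t).support := by
    rw [Walk.support_cons, List.disjoint_cons_right]
    exact ⟨hrs, hst⟩
  refine ⟨_, isPath_append_cons hs (ht.cons hrt) hs_rt hxr, ?_⟩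
  simp only [Walk.length_append, Walk.length_cons, add_assoc, Nat.reduceAdd]

theorem exists_isPath_length_eq_add_one_of_append (hr : G.IsUniversal r)
    {s : G.Walk w u} {t : G.Walk u v} (hp : (s.append t).IsPath)
    (hrp : r ∉ (s.append t).support) (huv : u ≠ v) :
    ∃ q : G.Walk u v, q.IsPath ∧ q.length = (s.append t).length + 1 := by
  have ht : ¬t.Nil := Walk.not_nil_of_ne huv
  obtain ⟨hrs, hrt⟩ : r ∉ s.support ∧ r ∉ t.support := by
    simpa only [Walk.mem_support_append_iff, not_or] using hrp
  have hrt' : r ∉ t.tail.support := mt (t.isSubwalk_rfl.tail.support_subset ·) hrt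
  obtain ⟨q, hq, hq_length⟩ := exists_isPath_length_eq_add_add_two
    (s := s.reverse) (t := t.tail) (r := r) hp.of_append_left.reverse hp.of_append_right.tail
    (by simpa using hrs) hrt' (by simpa using hp.disjoint_support_of_append ht)
    (hr (ne_of_mem_of_not_mem s.start_mem_support hrs).symm).symm
    (hr (ne_of_mem_of_not_mem t.tail.start_mem_support hrt').symm)
  refine ⟨q, hq, ?_⟩
  rw [hq_length, Walk.length_reverse, Walk.length_append, ← Walk.length_tail_add_one ht]
  rfl

theorem exists_isPath_length_eq_add_one_of_notMem (hr : G.IsUniversal r) {p : G.Walk w v}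
    (hp : p.IsPath) (hp_nil : ¬p.Nil) (hrp : r ∉ p.support) (hur : u ≠ r) (hup : u ∉ p.support) :
    ∃ q : G.Walk u v, q.IsPath ∧ q.length = p.length + 1 := by
  have htail : p.tail.support ⊆ p.support := p.isSubwalk_rfl.tail.support_subset
  have hrt : r ∉ p.tail.support := mt (@htail r) hrp
  obtain ⟨q, hq, hq_length⟩ := exists_isPath_length_eq_add_add_two
    (s := (Walk.nil : G.Walk u u)) (t := p.tail) (r := r) .nil hp.tail
    (by simpa using hur.symm) hrt (by simpa using mt (@htail u) hup) (hr hur.symm).symm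
    (hr (ne_of_mem_of_not_mem p.tail.start_mem_support hrt).symm)
  refine ⟨q, hq, ?_⟩
  rw [hq_length, Walk.length_nil, ← Walk.length_tail_add_one hp_nil]
  omega

theorem exists_isPath_length_eq_add_one (hr : G.IsUniversal r) {p : G.Walk w v}
    (hp : p.IsPath) (hp_nil : ¬p.Nil) (hrp : r ∉ p.support) (huv : u ≠ v) :
    ∃ q : G.Walk u v, q.IsPath ∧ q.length = p.length + 1 := by
  obtain rfl | hur := eq_or_ne u r
  · have huw : u ≠ w := (ne_of_mem_of_not_mem p.start_mem_support hrp).symm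
    exact ⟨.cons (hr huw) p, hp.cons hrp, rfl⟩
  by_cases hup : u ∈ p.support
  · obtain ⟨s, t, rfl⟩ := Walk.mem_support_iff_exists_append.mp hup
    exact exists_isPath_length_eq_add_one_of_append hr hp hrp huv
  · exact exists_isPath_length_eq_add_one_of_notMem hr hp hp_nil hrp hur hup

end

theorem stmt_8_general {V : Type*} {G : SimpleGraph V} {r u v w : V} (hr : G.IsUniversal r)
    {p : G.Walk v w} (hp : p.IsPath) (hrp : r ∉ p.support) (huv : u ≠ v)
    {ℓ : ℕ} (hdist : G.dist u v ≤ ℓ) (hℓ : ℓ ≤ p.length + 1) :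
    ∃ q : G.Walk u v, q.IsPath ∧ q.length = ℓ := by
  have hdist_pos : 0 < G.dist u v := (Connected.of_isUniversal hr).pos_dist_of_ne huv
  obtain rfl | hℓ_two : ℓ = 1 ∨ 2 ≤ ℓ := by omega
  · have hadj : G.Adj u v := dist_eq_one_iff_adj.mp (by omega)
    exact ⟨hadj.toWalk, hadj.isPath_toWalk, rfl⟩
  have hlength : (p.take (ℓ - 1)).reverse.length = ℓ - 1 := by
    rw [Walk.length_reverse, Walk.take_length]
    omega
  have hnil : ¬(p.take (ℓ - 1)).reverse.Nil := by
    rw [Walk.not_nil_iff_lt_length]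
    omega
  have hr_take : r ∉ (p.take (ℓ - 1)).reverse.support := by
    rw [Walk.support_reverse, List.mem_reverse]
    exact mt ((p.isSubwalk_take _).support_subset ·) hrp
  obtain ⟨q, hq, hq_length⟩ :=
    exists_isPath_length_eq_add_one hr (hp.take _).reverse hnil hr_take huv
  exact ⟨q, hq, by omega⟩

theorem stmt_8 {V : Type*} [Fintype V] (G : SimpleGraph V)
    {k : ℕ} (hk : 4 ≤ k)
    {r : V} (hr : ∀ w : V, w ≠ r → G.Adj r w)
    {v : V} (hvr : v ≠ r)
    (hpath : ∃ (w : V) (p : G.Walk v w), p.IsPath ∧ r ∉ p.support ∧ p.length = k - 3) :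
    ∀ u : V, u ≠ v → ∀ ℓ : ℕ, G.dist u v ≤ ℓ → ℓ ≤ k - 2 →
      ∃ q : G.Walk u v, q.IsPath ∧ q.length = ℓ := by
  obtain ⟨w, p, hp, hrp, hlen⟩ := hpath
  exact fun u huv ℓ hdist hℓ ↦
    stmt_8_general (fun w hw ↦ hr w hw.symm) hp hrp huv hdist (by omega)
end

section
/- Let k ≥ 5 be an integer and let G be a 2-connected finite simple graph with distinct vertices h and u such that h is adjacent to every vertex of G other than h and u, and h is not adjacent to u. If G contains no cycle of length exactly k, then every path from u to h in G has length at most k − 2. -/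
/-- A finite simple graph is 2-connected if it has at least 3 vertices and
deleting any single vertex leaves it connected. -/
def TwoConnected {V : Type*} [Fintype V] (G : SimpleGraph V) : Prop :=
  3 ≤ Fintype.card V ∧ ∀ v : V, (G.induce ({v}ᶜ : Set V)).Connected

/-!
If a path from `u` to `h` has length at least `k - 1`, its first `k - 1` vertices form a path `q`
avoiding `h`. As soon as both ends of a path on `k - 1` vertices avoiding `h` are adjacent to `h`,
it closes up through `h` to a cycle of length `k`; the only possible obstruction is the end `u` of
`q`. To move `u` off the end, take a neighbor `w` of `u` other than its successor on `q`: if `w`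
lies on `q`, a Pósa rotation makes the predecessor of `w` the new end; otherwise prepend `w` to `q`
and drop the last vertex of `q`.
-/

open SimpleGraph

theorem TwoConnected.exists_adj_ne {V : Type*} [Fintype V] {G : SimpleGraph V}
    (hG : TwoConnected G) {v b : V} (hvb : v ≠ b) : ∃ w, G.Adj v w ∧ w ≠ b := by
  obtain ⟨a, hab, hav⟩ : ∃ a, a ≠ b ∧ a ≠ v :=
    ENat.exists_ne_ne_of_three_le (by simpa using hG.1) b v
  have : Nontrivial ({b}ᶜ : Set V) := ⟨⟨a, hab⟩, ⟨v, hvb⟩, fun hE ↦ hav (congrArg Subtype.val hE)⟩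
  obtain ⟨w, hvw⟩ := (hG.2 b).preconnected.exists_adj_of_nontrivial ⟨v, hvb⟩
  exact ⟨w, hvw, w.2⟩

theorem TwoConnected.nontrivial_neighborSet {V : Type*} [Fintype V] {G : SimpleGraph V}
    (hG : TwoConnected G) (v : V) : (G.neighborSet v).Nontrivial := by
  have : Nontrivial V := Fintype.one_lt_card_iff_nontrivial.mp (by have := hG.1; omega)
  obtain ⟨b, hb⟩ := exists_ne v
  obtain ⟨w, hvw, -⟩ := hG.exists_adj_ne hb.symm
  obtain ⟨x, hvx, hxw⟩ := hG.exists_adj_ne hvw.ne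
  exact ⟨x, hvx, w, hvw, hxw⟩

section Walk

variable {V : Type*} {G : SimpleGraph V} {u v w h : V}

theorem ne_of_isPath_of_length_pos {q : G.Walk u v} (hq : q.IsPath) (hpos : 0 < q.length) :
    v ≠ u :=
  fun hvu ↦ hpos.ne' (Walk.length_eq_zero_iff.mpr (hq.nil_iff_eq.mpr hvu.symm))

theorem notMem_support_take_of_lt_length {p : G.Walk u h} (hp : p.IsPath) {n : ℕ}
    (hn : n < p.length) : h ∉ (p.take n).support := by
  rw [Walk.mem_support_iff_exists_getVert]
  rintro ⟨i, hi, -⟩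
  rw [Walk.take_getVert, hp.getVert_eq_end_iff (by omega)] at hi
  omega

theorem exists_isCycle_of_isPath_of_adj {q : G.Walk u v} (hq : q.IsPath) (hpos : 0 < q.length)
    (hh : h ∉ q.support) (hu : G.Adj h u) (hv : G.Adj h v) :
    ∃ c : G.Walk h h, c.IsCycle ∧ c.length = q.length + 2 := by
  refine ⟨.cons hu (q.concat hv.symm), ?_, by simp⟩
  rw [Walk.isCycle_iff_isPath_tail_and_le_length]
  exact ⟨by simpa using hq.concat hh hv.symm, by simpa using Nat.succ_le_of_lt hpos⟩

theorem exists_posaRotation_support_perm (q : G.Walk u v) (hw : w ∈ q.support) (huw : G.Adj u w) :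
    ∃ z, s(z, w) ∈ q.edges ∧ ∃ r : G.Walk z v, r.support.Perm q.support := by
  classical
  have hnil : ¬(q.takeUntil w hw).Nil := fun hn ↦ huw.ne hn.eq
  -- If `q` is `u … z w … v`, the rotated walk is `z … u w … v`.
  refine ⟨_, q.edges_takeUntil_subset_edges hw (Walk.mk_penultimate_end_mem_edges hnil),
    (q.takeUntil w hw).dropLast.reverse.append (.cons huw (q.dropUntil w hw)), ?_⟩
  have hsupp : q.support =
      (q.takeUntil w hw).dropLast.support ++ (q.dropUntil w hw).support := by
    rw [Walk.support_dropLast hnil, ← Walk.support_append_eq_support_dropLast_append, q.take_spec]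
  rw [hsupp, Walk.support_append, Walk.support_reverse, Walk.support_cons, List.tail_cons]
  exact (List.reverse_perm _).append_right _

theorem exists_isPath_posaRotation {q : G.Walk u v} (hq : q.IsPath) (hw : w ∈ q.support)
    (huw : G.Adj u w) (hsnd : w ≠ q.snd) :
    ∃ z, z ≠ u ∧ ∃ r : G.Walk z v, r.IsPath ∧ r.length = q.length ∧ r.support ⊆ q.support := by
  obtain ⟨z, hzw, r, hr⟩ := exists_posaRotation_support_perm q hw huw
  refine ⟨z, ?_, r, .mk' (hr.nodup_iff.mpr hq.support_nodup), ?_, hr.subset⟩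
  · rintro rfl
    exact hsnd (hq.eq_snd_of_mem_edges hzw)
  · simpa using hr.length_eq

theorem exists_isPath_cons_take {q : G.Walk u v} (hq : q.IsPath) (hlen : 2 ≤ q.length)
    (hw : w ∉ q.support) (hwu : G.Adj w u) :
    ∃ y, y ≠ u ∧ ∃ r : G.Walk w y, r.IsPath ∧ r.length = q.length ∧
      r.support ⊆ w :: q.support := by
  have hsub : (q.take (q.length - 1)).support ⊆ q.support := (q.isSubwalk_take _).support_subset
  refine ⟨_, ?_, .cons hwu (q.take (q.length - 1)), ?_, ?_, ?_⟩
  · rw [Ne, hq.getVert_eq_start_iff (by omega)]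
    omega
  · exact (hq.take _).cons fun hmem ↦ hw (hsub hmem)
  · rw [Walk.length_cons, Walk.take_length]
    omega
  · exact List.cons_subset_cons w hsub

theorem exists_isPath_ends_ne {q : G.Walk u v} (hq : q.IsPath) (hlen : 2 ≤ q.length)
    (huw : G.Adj u w) (hsnd : w ≠ q.snd) :
    ∃ a b, a ≠ u ∧ b ≠ u ∧ ∃ r : G.Walk a b, r.IsPath ∧ r.length = q.length ∧
      r.support ⊆ w :: q.support := by
  by_cases hw : w ∈ q.support
  · obtain ⟨z, hzu, r, hr, hrlen, hrsub⟩ := exists_isPath_posaRotation hq hw huw hsnd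
    exact ⟨z, v, hzu, ne_of_isPath_of_length_pos hq (by omega), r, hr, hrlen,
      List.subset_cons_of_subset w hrsub⟩
  · obtain ⟨y, hyu, r, hr⟩ := exists_isPath_cons_take hq hlen hw huw.symm
    exact ⟨w, y, huw.ne', hyu, r, hr⟩

theorem exists_isPath_ends_adj (hdom : ∀ x, x ≠ h → x ≠ u → G.Adj h x)
    (hu : (G.neighborSet u).Nontrivial) {p : G.Walk u h} (hp : p.IsPath) {n : ℕ} (hn : 2 ≤ n)
    (hnp : n < p.length) :
    ∃ a b, G.Adj h a ∧ G.Adj h b ∧ ∃ r : G.Walk a b, r.IsPath ∧ r.length = n ∧ h ∉ r.support := by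
  obtain ⟨y, q, hq, hqlen, hhq⟩ :
      ∃ y, ∃ q : G.Walk u y, q.IsPath ∧ q.length = n ∧ h ∉ q.support :=
    ⟨_, p.take n, hp.take n, by simpa using hnp.le, notMem_support_take_of_lt_length hp hnp⟩
  have adj_of_mem {a b x : V} {r : G.Walk a b} (hhr : h ∉ r.support) (hx : x ∈ r.support)
      (hxu : x ≠ u) : G.Adj h x :=
    hdom x (fun hxh ↦ hhr (hxh ▸ hx)) hxu
  by_cases hadj : G.Adj h u
  · have hyu : y ≠ u := ne_of_isPath_of_length_pos hq (by omega)
    exact ⟨u, y, hadj, adj_of_mem hhq q.end_mem_support hyu, q, hq, hqlen, hhq⟩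
  · obtain ⟨w, huw, hsnd⟩ := hu.exists_ne q.snd
    obtain ⟨a, b, hau, hbu, r, hr, hrlen, hrsub⟩ :=
      exists_isPath_ends_ne hq (by omega) huw hsnd
    have hhw : h ≠ w := fun hhw ↦ hadj (hhw ▸ huw.symm)
    have hhr : h ∉ r.support := fun hmem ↦
      List.not_mem_cons_of_ne_of_not_mem hhw hhq (hrsub hmem)
    exact ⟨a, b, adj_of_mem hhr r.start_mem_support hau, adj_of_mem hhr r.end_mem_support hbu,
      r, hr, hrlen.trans hqlen, hhr⟩

end Walk

theorem stmt_9_general {V : Type*} {G : SimpleGraph V} {k : ℕ} (hk : 4 ≤ k) {h u : V}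
    (hdom : ∀ v, v ≠ h → v ≠ u → G.Adj h v) (hu : (G.neighborSet u).Nontrivial)
    (hnocyc : ¬ ∃ (v : V) (c : G.Walk v v), c.IsCycle ∧ c.length = k)
    {p : G.Walk u h} (hp : p.IsPath) : p.length ≤ k - 2 := by
  by_contra! hlong
  obtain ⟨a, b, ha, hb, r, hr, hrlen, hhr⟩ :=
    exists_isPath_ends_adj hdom hu hp (by omega) hlong
  obtain ⟨c, hc, hclen⟩ := exists_isCycle_of_isPath_of_adj hr (by omega) hhr ha hb
  exact hnocyc ⟨h, c, hc, by omega⟩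

theorem stmt_9 {V : Type*} [Fintype V] (G : SimpleGraph V)
    (hG : TwoConnected G) {k : ℕ} (hk : 5 ≤ k)
    {h u : V} (hhu : h ≠ u)
    (hdom : ∀ v : V, v ≠ h → v ≠ u → G.Adj h v) (hnadj : ¬ G.Adj h u)
    (hnocyc : ¬ ∃ (v : V) (c : G.Walk v v), c.IsCycle ∧ c.length = k) :
    ∀ p : G.Walk u h, p.IsPath → p.length ≤ k - 2 :=
  fun _ hp ↦ stmt_9_general (by omega) hdom (hG.nontrivial_neighborSet u) hnocyc hp
end

section
/- Let G be a finite simple graph and let P be a path of maximum length in G with vertices x_1, x_2, …, x_m in order. Let 1 ≤ j ≤ m and let Q be a path in G from x_1 to x_j that contains no vertex x_i with i > j. Then Q has length at most j − 1. -/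
/-!
Replacing the initial segment `x_1, …, x_j` of `P` by `Q` yields a path, because `Q` avoids the rest
of `P`. By maximality it is no longer than `P`, so `Q` is no longer than the segment it replaced.
-/

section

variable {V : Type*} {G : SimpleGraph V} {a u v w : V}

theorem isPath_append_of_disjoint_support_tail {p : G.Walk u v} {q : G.Walk v w}
    (hp : p.IsPath) (hq : q.IsPath) (hpq : p.support.Disjoint q.support.tail) :
    (p.append q).IsPath := by
  rw [SimpleGraph.Walk.isPath_def, SimpleGraph.Walk.support_append]
  exact hp.support_nodup.append hq.support_nodup.tail hpq

theorem mem_tail_support_drop_iff {p : G.Walk u w} {n : ℕ} :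
    v ∈ (p.drop n).support.tail ↔
      ∃ (i : ℕ) (hi : i < p.support.length), n < i ∧ p.support[i] = v := by
  rw [SimpleGraph.Walk.drop_support_eq_support_drop_min, List.tail_drop, List.mem_drop_iff_getElem]
  have hlen := p.length_support
  constructor
  · rintro ⟨k, hk, rfl⟩
    exact ⟨n ⊓ p.length + 1 + k, by omega, by omega, rfl⟩
  · rintro ⟨i, hi, hni, rfl⟩
    refine ⟨i - (n ⊓ p.length + 1), by omega, ?_⟩
    congr 1
    omega

theorem length_le_of_forall_isPath_length_le_append {p : G.Walk u v} {q : G.Walk v w}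
    {r : G.Walk a v} (hq : q.IsPath) (hr : r.IsPath) (hrq : r.support.Disjoint q.support.tail)
    (hmax : ∀ s : G.Walk a w, s.IsPath → s.length ≤ (p.append q).length) :
    r.length ≤ p.length := by
  have hle := hmax (r.append q) (isPath_append_of_disjoint_support_tail hr hq hrq)
  simpa only [SimpleGraph.Walk.length_append, add_le_add_iff_right] using hle

end

theorem stmt_11_general {V : Type*} {G : SimpleGraph V} {a u w : V}
    {P : G.Walk u w} (hP : P.IsPath)
    (hmax : ∀ R : G.Walk a w, R.IsPath → R.length ≤ P.length)
    {n : ℕ} (hn : n < P.support.length)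
    {Q : G.Walk a P.support[n]} (hQ : Q.IsPath)
    (havoid : ∀ (i : ℕ) (hi : i < P.support.length), n < i → P.support[i] ∉ Q.support) :
    Q.length ≤ n := by
  have hend : P.support[n] = P.getVert n := P.support_getElem_eq_getVert hn
  have hpath : (Q.copy rfl hend).IsPath := (SimpleGraph.Walk.isPath_copy ..).mpr hQ
  have hdisj : (Q.copy rfl hend).support.Disjoint (P.drop n).support.tail := by
    rw [SimpleGraph.Walk.support_copy]
    intro x hxQ hxP
    obtain ⟨i, hi, hni, rfl⟩ := mem_tail_support_drop_iff.mp hxP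
    exact havoid i hi hni hxQ
  calc Q.length = (Q.copy rfl hend).length := (Q.length_copy rfl hend).symm
    _ ≤ (P.take n).length :=
        length_le_of_forall_isPath_length_le_append (hP.drop n) hpath hdisj
          (by rwa [P.append_take_drop_eq])
    _ = n ⊓ P.length := P.take_length n
    _ ≤ n := inf_le_left

theorem stmt_11 {V : Type*} [Fintype V] (G : SimpleGraph V)
    {x₁ xₘ : V} (P : G.Walk x₁ xₘ) (hP : P.IsPath)
    (hmax : ∀ (a b : V) (R : G.Walk a b), R.IsPath → R.length ≤ P.length)
    (j : ℕ) (hj1 : 1 ≤ j) (hjm : j ≤ P.support.length)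
    (Q : G.Walk x₁ (P.support.get ⟨j - 1, by omega⟩)) (hQ : Q.IsPath)
    (havoid : ∀ i : ℕ, j < i → (hi : i ≤ P.support.length) →
      P.support.get ⟨i - 1, by omega⟩ ∉ Q.support) :
    Q.length ≤ j - 1 :=
  stmt_11_general hP (hmax x₁ xₘ) (by omega) hQ
    fun i hi hji => havoid (i + 1) (by omega) hi
end

section
/- Let k ≥ 5 and s ≥ 3 be integers, set k' = 3 + (k − 2)(s − 2), and let G be a finite simple graph with circumference strictly less than k. Let P be a path in G with vertices x_1, x_2, …, x_m in order, where m ≥ k', and let Y be a path in G from x_1 to x_{k'}. Then Y contains at least s vertices of P. -/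
/-! Cut `Y` at each of its vertices on `P`. Every piece is an ear of `P`. If its ends are at least
two apart along `P`, it forms a cycle together with the segment of `P` between them, so the ends of
a piece are always at most `k - 2` apart along `P`. If `Y` meets `P` in `c` vertices, there are
`c - 1` pieces, and the ends of `Y` are at most `(k - 2) * (c - 1)` apart along `P`. -/

section

open SimpleGraph

variable {V : Type*} {G : SimpleGraph V} {u v w : V}

/-- An ear of a vertex set `S`: a path that meets `S` in no vertices other than its ends. The ends
themselves are not required to lie in `S`. -/
def IsEar (S : Set V) (A : G.Walk u v) : Prop :=
  A.IsPath ∧ ∀ x ∈ A.support, x ∈ S → x = u ∨ x = v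

theorem IsEar.mono {S T : Set V} {A : G.Walk u v} (hA : IsEar T A) (hST : S ⊆ T) : IsEar S A :=
  ⟨hA.1, fun x hxA hxS ↦ hA.2 x hxA (hST hxS)⟩

theorem start_notMem_support_tail_of_isPath {A : G.Walk u v} (hA : A.IsPath) :
    u ∉ A.support.tail := by
  have hnodup := hA.support_nodup
  rw [← A.cons_tail_support] at hnodup
  exact (List.nodup_cons.1 hnodup).1

theorem IsEar.isCycle_append {A : G.Walk u v} {Q : G.Walk v u}
    (hA : IsEar {x | x ∈ Q.support} A) (hQ : Q.IsPath) (hlen : 1 < Q.length) :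
    (A.append Q).IsCycle := by
  refine hA.1.isCycle_append hQ (fun x hxA hxQ ↦ ?_) (.inr hlen)
  rcases hA.2 x (List.mem_of_mem_tail hxA) (List.mem_of_mem_tail hxQ) with rfl | rfl
  · exact start_notMem_support_tail_of_isPath hA.1 hxA
  · exact start_notMem_support_tail_of_isPath hQ hxQ

theorem exists_isEar_append_eq {S : Finset V} {Y : G.Walk u v} (hY : Y.IsPath) (hv : v ∈ S)
    (huv : u ≠ v) :
    ∃ w ∈ S, u ≠ w ∧ ∃ (A : G.Walk u w) (B : G.Walk w v), IsEar S A ∧ A.append B = Y := by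
  classical
  obtain ⟨w, hw, hwY, hfirst⟩ := Y.exists_mem_support_forall_mem_support_imp_eq (S.erase u)
    ⟨v, by simp [hv, huv.symm]⟩
  obtain ⟨hwu, hwS⟩ := Finset.mem_erase.1 hw
  refine ⟨w, hwS, hwu.symm, Y.takeUntil w hwY, Y.dropUntil w hwY,
    ⟨hY.takeUntil hwY, fun x hxA hxS ↦ ?_⟩, Y.take_spec hwY⟩
  exact or_iff_not_imp_left.2 fun hxu ↦ hfirst x (Finset.mem_erase.2 ⟨hxu, hxS⟩) hxA

variable [DecidableEq V]

theorem card_support_inter_lt_card_support_append_inter {S : Finset V} {A : G.Walk u w}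
    {B : G.Walk w v} (hAB : (A.append B).IsPath) (hu : u ∈ S) (huw : u ≠ w) :
    (B.support.toFinset ∩ S).card < ((A.append B).support.toFinset ∩ S).card := by
  have huB : u ∉ B.support := fun huB ↦
    hAB.ne_of_mem_support_of_append huw A.start_mem_support huB rfl
  refine Finset.card_lt_card (Finset.ssubset_iff_of_subset ?_ |>.2 ⟨u, ?_, ?_⟩)
  · exact Finset.inter_subset_inter_right fun x hx ↦ by
      simp only [List.mem_toFinset, Walk.mem_support_append_iff] at hx ⊢
      exact .inr hx
  · simp [hu]
  · simp [huB]

theorem dist_le_mul_card_support_inter_sub_one {S : Finset V} {f : V → ℕ} {d : ℕ}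
    (hear : ∀ x ∈ S, ∀ y ∈ S, ∀ A : G.Walk x y, IsEar S A → Nat.dist (f x) (f y) ≤ d)
    (hu : u ∈ S) (hv : v ∈ S) {Y : G.Walk u v} (hY : Y.IsPath) :
    Nat.dist (f u) (f v) ≤ d * ((Y.support.toFinset ∩ S).card - 1) := by
  induction hc : (Y.support.toFinset ∩ S).card using Nat.strong_induction_on
    generalizing u with | _ c ih
  obtain rfl | huv := eq_or_ne u v
  · simp [Nat.dist_self]
  obtain ⟨w, hw, huw, A, B, hA, rfl⟩ := exists_isEar_append_eq hY hv huv
  have hlt := card_support_inter_lt_card_support_append_inter hY hu huw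
  have hpos : 0 < (B.support.toFinset ∩ S).card := Finset.card_pos.2 ⟨v, by simp [hv]⟩
  calc Nat.dist (f u) (f v)
      ≤ Nat.dist (f u) (f w) + Nat.dist (f w) (f v) := Nat.dist.triangle_inequality ..
    _ ≤ d + d * ((B.support.toFinset ∩ S).card - 1) :=
        add_le_add (hear u hu w hw A hA) (ih _ (hc ▸ hlt) hw hY.of_append_right rfl)
    _ = d * ((B.support.toFinset ∩ S).card - 1 + 1) := by ring
    _ ≤ d * (c - 1) := by gcongr; omega

theorem exists_isPath_length_eq_dist_idxOf {a b : V} {P : G.Walk a b} (hP : P.IsPath)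
    (hu : u ∈ P.support) (hv : v ∈ P.support) :
    ∃ Q : G.Walk u v, Q.IsPath ∧ Q.support ⊆ P.support ∧
      Q.length = Nat.dist (P.support.idxOf u) (P.support.idxOf v) := by
  wlog huv : P.support.idxOf u ≤ P.support.idxOf v generalizing u v
  · obtain ⟨Q, hQ, hQP, hlen⟩ := this hv hu (le_of_not_ge huv)
    exact ⟨Q.reverse, hQ.reverse, by simpa using hQP, by simp [hlen, Nat.dist_comm]⟩
  have hprefix := P.support_takeUntil_prefix_support hv
  have hu_prefix : u ∈ (P.takeUntil v hv).support := by
    rw [hprefix.mem_iff_idxOf_lt_length, Walk.length_support, Walk.length_takeUntil]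
    omega
  refine ⟨(P.takeUntil v hv).dropUntil u hu_prefix, (hP.takeUntil hv).dropUntil hu_prefix,
    List.Subset.trans (Walk.support_dropUntil_subset_support _ hu_prefix) hprefix.subset, ?_⟩
  rw [Walk.length_dropUntil, Walk.length_takeUntil, hprefix.idxOf_eq_of_mem hu_prefix,
    Nat.dist_eq_sub_of_le huv]

theorem IsEar.dist_idxOf_le {k : ℕ} (hk : 3 ≤ k)
    (hcirc : ∀ (v : V) (c : G.Walk v v), c.IsCycle → c.length < k)
    {a b : V} {P : G.Walk a b} (hP : P.IsPath) (hu : u ∈ P.support) (hv : v ∈ P.support)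
    {A : G.Walk u v} (hA : IsEar {x | x ∈ P.support} A) :
    Nat.dist (P.support.idxOf u) (P.support.idxOf v) ≤ k - 2 := by
  by_contra! hfar
  obtain ⟨Q, hQ, hQP, hlen⟩ := exists_isPath_length_eq_dist_idxOf hP hv hu
  rw [Nat.dist_comm] at hlen
  have hAlen : A.length ≠ 0 := fun h0 ↦ by
    obtain rfl := Walk.eq_of_length_eq_zero h0
    simp only [Nat.dist_self, Nat.not_lt_zero] at hfar
  have hcycle : (A.append Q).IsCycle := (hA.mono fun _ hx ↦ hQP hx).isCycle_append hQ (by omega)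
  have hshort := hcirc u _ hcycle
  rw [Walk.length_append] at hshort
  omega

theorem stmt_13_general {k n : ℕ} (hk : 3 ≤ k)
    (hcirc : ∀ (v : V) (c : G.Walk v v), c.IsCycle → c.length < k)
    {a b : V} {P : G.Walk a b} (hP : P.IsPath) (hu : u ∈ P.support) (hv : v ∈ P.support)
    (hfar : (k - 2) * n < Nat.dist (P.support.idxOf u) (P.support.idxOf v))
    {Y : G.Walk u v} (hY : Y.IsPath) :
    n + 2 ≤ (Y.support.toFinset ∩ P.support.toFinset).card := by
  have hle : Nat.dist (P.support.idxOf u) (P.support.idxOf v) ≤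
      (k - 2) * ((Y.support.toFinset ∩ P.support.toFinset).card - 1) := by
    refine dist_le_mul_card_support_inter_sub_one (f := (P.support.idxOf ·))
      (fun x hx y hy A hA ↦ ?_) (List.mem_toFinset.2 hu) (List.mem_toFinset.2 hv) hY
    have hA' : IsEar {x | x ∈ P.support} A := hA.mono fun _ hz ↦ List.mem_toFinset.2 hz
    exact hA'.dist_idxOf_le hk hcirc hP (List.mem_toFinset.1 hx) (List.mem_toFinset.1 hy)
  have hlt := Nat.lt_of_mul_lt_mul_left (hfar.trans_le hle)
  omega

end

theorem stmt_13 {V : Type*} [Fintype V] [DecidableEq V] (G : SimpleGraph V)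
    {k s k' : ℕ} (hk : 5 ≤ k) (hs : 3 ≤ s) (hk' : k' = 3 + (k - 2) * (s - 2))
    (hcirc : ∀ (v : V) (c : G.Walk v v), c.IsCycle → c.length < k)
    {x₁ xₘ : V} (P : G.Walk x₁ xₘ) (hP : P.IsPath)
    (hm : k' ≤ P.support.length)
    (Y : G.Walk x₁ (P.support.get ⟨k' - 1, by omega⟩)) (hY : Y.IsPath) :
    s ≤ (Y.support.toFinset ∩ P.support.toFinset).card := by
  have hstart : P.support.idxOf x₁ = 0 := by
    rw [← P.cons_tail_support, List.idxOf_cons_self]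
  have hend : P.support.idxOf (P.support.get ⟨k' - 1, by omega⟩) = k' - 1 :=
    hP.support_nodup.idxOf_getElem ..
  have hfar : (k - 2) * (s - 2) <
      Nat.dist (P.support.idxOf x₁) (P.support.idxOf (P.support.get ⟨k' - 1, by omega⟩)) := by
    rw [hstart, hend, Nat.dist_zero_left]
    omega
  have hcard := stmt_13_general (by omega) hcirc hP P.start_mem_support (List.get_mem ..) hfar hY
  omega
end
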